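/- Let γ: ℝ × (−ε, ε) → ℝ² be a smooth family of closed plane curves with ∂_t γ = f N for a smooth function f(u,t), and let ψ be smooth on an open set containing all the images γ(ℝ, t). Then the ψ-length satisfies d/dt L_ψ(t) = −∫₀^{2π} f · k_ψ · e^{ψ(γ)} |∂_u γ| du. In particular, under ψMCF (where f = k_ψ), d/dt L_ψ(t) = −∫₀^{2π} k_ψ² e^{ψ(γ)} |∂_u γ| du ≤ 0, so the ψ-length is nonincreasing along the flow. -/

import Mathlib

noncomputable section
open Real Set

def dot2 (v w : ℝ × ℝ) : ℝ := v.1 * w.1 + v.2 * w.2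

def nrm2 (v : ℝ × ℝ) : ℝ := Real.sqrt (v.1 ^ 2 + v.2 ^ 2)

def Jrot (v : ℝ × ℝ) : ℝ × ℝ := (-v.2, v.1)

structure IsClosedCurve (γ : ℝ → ℝ × ℝ) : Prop where
  smooth : ContDiff ℝ (⊤ : ℕ∞) γ
  periodic : Function.Periodic γ (2 * π)
  regular : ∀ u, deriv γ u ≠ 0

def tangentC (γ : ℝ → ℝ × ℝ) (u : ℝ) : ℝ × ℝ := (nrm2 (deriv γ u))⁻¹ • deriv γ u

def normalC (γ : ℝ → ℝ × ℝ) (u : ℝ) : ℝ × ℝ := Jrot (tangentC γ u)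

def arcDeriv {F : Type*} [NormedAddCommGroup F] [NormedSpace ℝ F]
    (γ : ℝ → ℝ × ℝ) (h : ℝ → F) (u : ℝ) : F :=
  (nrm2 (deriv γ u))⁻¹ • deriv h u

def curvature (γ : ℝ → ℝ × ℝ) (u : ℝ) : ℝ :=
  dot2 (arcDeriv γ (tangentC γ) u) (normalC γ u)

def psiCurv (ψ : ℝ × ℝ → ℝ) (γ : ℝ → ℝ × ℝ) (u : ℝ) : ℝ :=
  curvature γ u - fderiv ℝ ψ (γ u) (normalC γ u)

def IsPsiMinimal (ψ : ℝ × ℝ → ℝ) (γ : ℝ → ℝ × ℝ) : Prop :=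
  ∀ u, psiCurv ψ γ u = 0

def signedArea (γ : ℝ → ℝ × ℝ) : ℝ :=
  (1/2) * ∫ u in (0:ℝ)..(2*π), ((γ u).1 * (deriv γ u).2 - (γ u).2 * (deriv γ u).1)

def turningNumber (γ : ℝ → ℝ × ℝ) : ℝ :=
  (1/(2*π)) * ∫ u in (0:ℝ)..(2*π), curvature γ u * nrm2 (deriv γ u)

def windingNumber (γ : ℝ → ℝ × ℝ) : ℝ :=
  (1/(2*π)) * ∫ u in (0:ℝ)..(2*π),
    ((γ u).1 * (deriv γ u).2 - (γ u).2 * (deriv γ u).1) / (nrm2 (γ u))^2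

def hess2 (ψ : ℝ × ℝ → ℝ) (x v : ℝ × ℝ) : ℝ :=
  fderiv ℝ (fun y => fderiv ℝ ψ y v) x v

def SmoothFamily (γ : ℝ → ℝ → ℝ × ℝ) : Prop :=
  ContDiff ℝ (⊤ : ℕ∞) fun p : ℝ × ℝ => γ p.1 p.2

/-!
Under `∂_t γ = f N` the velocity `V = ∂_t γ` is orthogonal to the tangent `T`. Commuting the partial
derivatives and differentiating `⟨T, V⟩ = 0` in `u` gives
`∂_t |∂_u γ| = ⟨T, ∂_u V⟩ = -⟨∂_u T, V⟩ = -f k |∂_u γ|`, while `∂_t e^ψ = f ⟨∇ψ, N⟩ e^ψ`. Hence the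
integrand of `L_ψ` already satisfies the first variation formula pointwise, without integrating by
parts, and it only remains to differentiate under the integral sign.
-/

open Function MeasureTheory
open scoped Topology

section PartialDerivatives

variable {𝕜 E : Type*} [NontriviallyNormedField 𝕜] [NormedAddCommGroup E] [NormedSpace 𝕜 E]

theorem hasDerivAt_comp_prodMk_right {G : 𝕜 × 𝕜 → E} {G' : 𝕜 × 𝕜 →L[𝕜] E} {t u : 𝕜}
    (hG : HasFDerivAt G G' (t, u)) : HasDerivAt (fun v ↦ G (t, v)) (G' (0, 1)) u :=
  hG.comp_hasDerivAt u ((hasDerivAt_const u t).prodMk (hasDerivAt_id u))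

theorem hasDerivAt_comp_prodMk_left {G : 𝕜 × 𝕜 → E} {G' : 𝕜 × 𝕜 →L[𝕜] E} {t u : 𝕜}
    (hG : HasFDerivAt G G' (t, u)) : HasDerivAt (fun τ ↦ G (τ, u)) (G' (1, 0)) t :=
  hG.comp_hasDerivAt (f := fun τ ↦ (τ, u)) t
    ((hasDerivAt_id t).prodMk (hasDerivAt_const t u))

variable {F : 𝕜 → 𝕜 → E} {t u : 𝕜} {m n : WithTop ℕ∞}

theorem contDiffAt_deriv_snd (hF : ContDiffAt 𝕜 n (uncurry F) (t, u)) (hmn : m + 1 ≤ n) :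
    ContDiffAt 𝕜 m (fun p : 𝕜 × 𝕜 ↦ deriv (F p.1) p.2) (t, u) := by
  have hF' : ContDiffAt 𝕜 n (uncurry fun p : 𝕜 × 𝕜 ↦ F p.1) ((t, u), u) :=
    hF.comp ((t, u), u) (contDiffAt_fst.fst.prodMk contDiffAt_snd)
  exact (hF'.fderiv contDiffAt_snd hmn).clm_apply contDiffAt_const

theorem contDiffAt_deriv_fst (hF : ContDiffAt 𝕜 n (uncurry F) (t, u)) (hmn : m + 1 ≤ n) :
    ContDiffAt 𝕜 m (fun p : 𝕜 × 𝕜 ↦ deriv (fun τ ↦ F τ p.2) p.1) (t, u) := by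
  have hF' : ContDiffAt 𝕜 n (uncurry fun v τ ↦ F τ v) (u, t) :=
    hF.comp (u, t) (contDiffAt_snd.prodMk contDiffAt_fst)
  exact (contDiffAt_deriv_snd hF' hmn).comp (t, u) (contDiffAt_snd.prodMk contDiffAt_fst)

theorem deriv_deriv_comm (hF : ContDiffAt 𝕜 n (uncurry F) (t, u)) (hn : minSmoothness 𝕜 2 ≤ n) :
    deriv (fun τ ↦ deriv (F τ) u) t = deriv (fun v ↦ deriv (fun τ ↦ F τ v) t) u := by
  have hF₂ : ContDiffAt 𝕜 2 (uncurry F) (t, u) := hF.of_le (le_minSmoothness.trans hn)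
  have hdiff : ∀ᶠ p in 𝓝 (t, u), DifferentiableAt 𝕜 (uncurry F) p :=
    (hF₂.eventually (by simp)).mono fun p hp ↦ hp.differentiableAt two_ne_zero
  have hsnd : (fun τ ↦ deriv (F τ) u) =ᶠ[𝓝 t] fun τ ↦ fderiv 𝕜 (uncurry F) (τ, u) (0, 1) :=
    ((Continuous.prodMk_left u).tendsto t |>.eventually hdiff).mono fun τ hτ ↦
      (hasDerivAt_comp_prodMk_right hτ.hasFDerivAt).deriv
  have hfst : (fun v ↦ deriv (fun τ ↦ F τ v) t) =ᶠ[𝓝 u]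
      fun v ↦ fderiv 𝕜 (uncurry F) (t, v) (1, 0) :=
    ((Continuous.prodMk_right t).tendsto u |>.eventually hdiff).mono fun v hv ↦
      (hasDerivAt_comp_prodMk_left hv.hasFDerivAt).deriv
  have hfderiv : DifferentiableAt 𝕜 (fderiv 𝕜 (uncurry F)) (t, u) :=
    (hF₂.fderiv_right (m := 1) (by norm_num)).differentiableAt one_ne_zero
  have happly (w : 𝕜 × 𝕜) : HasFDerivAt (fun p ↦ fderiv 𝕜 (uncurry F) p w)
      ((ContinuousLinearMap.apply 𝕜 E w).comp (fderiv 𝕜 (fderiv 𝕜 (uncurry F)) (t, u))) (t, u) :=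
    (ContinuousLinearMap.apply 𝕜 E w).hasFDerivAt.comp (t, u) hfderiv.hasFDerivAt
  rw [hsnd.deriv_eq, hfst.deriv_eq]
  calc deriv (fun τ ↦ fderiv 𝕜 (uncurry F) (τ, u) (0, 1)) t
      = fderiv 𝕜 (fderiv 𝕜 (uncurry F)) (t, u) (1, 0) (0, 1) :=
        (hasDerivAt_comp_prodMk_left (happly (0, 1))).deriv
    _ = fderiv 𝕜 (fderiv 𝕜 (uncurry F)) (t, u) (0, 1) (1, 0) :=
        hF.isSymmSndFDerivAt hn _ _
    _ = deriv (fun v ↦ fderiv 𝕜 (uncurry F) (t, v) (1, 0)) u :=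
        (hasDerivAt_comp_prodMk_right (happly (1, 0))).deriv.symm

end PartialDerivatives

section ParametricIntegral

variable {E : Type*} [NormedAddCommGroup E] [NormedSpace ℝ E]
  {μ : Measure ℝ} [IsLocallyFiniteMeasure μ] {a b : ℝ}

theorem hasDerivAt_intervalIntegral_of_continuousOn {𝕜 : Type*} [RCLike 𝕜] [NormedSpace 𝕜 E]
    {F F' : 𝕜 → ℝ → E} {I : Set 𝕜} {t : 𝕜} (hI : I ∈ 𝓝 t)
    (hF : ∀ τ ∈ I, ContinuousOn (F τ) (uIcc a b))
    (hF' : ContinuousOn (uncurry F') (I ×ˢ uIcc a b))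
    (hderiv : ∀ τ ∈ I, ∀ u ∈ uIcc a b, HasDerivAt (fun σ ↦ F σ u) (F' τ u) τ) :
    HasDerivAt (fun τ ↦ ∫ u in a..b, F τ u ∂μ) (∫ u in a..b, F' t u ∂μ) t := by
  obtain ⟨K, hKt, hKI, hK⟩ := local_compact_nhds hI
  obtain ⟨C, hC⟩ := (hK.prod isCompact_uIcc).exists_bound_of_continuousOn
    (hF'.mono (prod_mono_left hKI))
  have hF't : ContinuousOn (F' t) (uIcc a b) :=
    hF'.comp (f := fun u ↦ (t, u)) (by fun_prop) fun u hu ↦ ⟨mem_of_mem_nhds hI, hu⟩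
  refine (intervalIntegral.hasDerivAt_integral_of_dominated_loc_of_deriv_le (bound := fun _ ↦ C)
    hKt ?_ (hF t (mem_of_mem_nhds hI)).intervalIntegrable ?_ ?_ intervalIntegrable_const ?_).2
  · filter_upwards [hI] with τ hτ
    exact (hF τ hτ).intervalIntegrable.def'.aestronglyMeasurable
  · exact hF't.intervalIntegrable.def'.aestronglyMeasurable
  · exact .of_forall fun u hu τ hτ ↦ hC (τ, u) ⟨hτ, uIoc_subset_uIcc hu⟩
  · exact .of_forall fun u hu τ hτ ↦ hderiv τ (hKI hτ) u (uIoc_subset_uIcc hu)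

theorem hasDerivAt_intervalIntegral_of_contDiffAt {F : ℝ → ℝ → E} {I : Set ℝ} {t : ℝ}
    (hI : I ∈ 𝓝 t)
    (hF : ∀ τ ∈ I, ∀ u ∈ uIcc a b, ContDiffAt ℝ 1 (uncurry F) (τ, u)) :
    HasDerivAt (fun τ ↦ ∫ u in a..b, F τ u ∂μ)
      (∫ u in a..b, deriv (fun τ ↦ F τ u) t ∂μ) t := by
  refine hasDerivAt_intervalIntegral_of_continuousOn
    (F' := fun τ u ↦ deriv (fun σ ↦ F σ u) τ) hI ?_ ?_ ?_
  · exact fun τ hτ u hu ↦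
      ((hF τ hτ u hu).continuousAt.comp (f := fun v ↦ (τ, v)) (by fun_prop)).continuousWithinAt
  · exact fun p hp ↦ (contDiffAt_deriv_fst (m := 0) (hF p.1 hp.1 p.2 hp.2)
      (by simp)).continuousAt.continuousWithinAt
  · exact fun τ hτ u hu ↦ (hasDerivAt_comp_prodMk_left
      ((hF τ hτ u hu).differentiableAt one_ne_zero).hasFDerivAt).differentiableAt.hasDerivAt

end ParametricIntegral

section Plane

theorem dot2_smul_right (c : ℝ) (v w : ℝ × ℝ) : dot2 v (c • w) = c * dot2 v w := by
  simp only [dot2, Prod.smul_fst, Prod.smul_snd, smul_eq_mul]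
  ring

theorem dot2_smul_left (c : ℝ) (v w : ℝ × ℝ) : dot2 (c • v) w = c * dot2 v w := by
  simp only [dot2, Prod.smul_fst, Prod.smul_snd, smul_eq_mul]
  ring

theorem dot2_Jrot_self (v : ℝ × ℝ) : dot2 v (Jrot v) = 0 := by
  simp only [dot2, Jrot]
  ring

theorem dot2_comm (v w : ℝ × ℝ) : dot2 v w = dot2 w v := by
  simp only [dot2, mul_comm]

theorem dot2_self_pos {v : ℝ × ℝ} (hv : v ≠ 0) : 0 < dot2 v v := by
  rcases not_and_or.1 (mt Prod.ext_iff.2 hv) with h | h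
  · exact add_pos_of_pos_of_nonneg (mul_self_pos.2 h) (mul_self_nonneg _)
  · exact add_pos_of_nonneg_of_pos (mul_self_nonneg _) (mul_self_pos.2 h)

theorem hasDerivAt_dot2 {v w : ℝ → ℝ × ℝ} {v' w' : ℝ × ℝ} {t : ℝ}
    (hv : HasDerivAt v v' t) (hw : HasDerivAt w w' t) :
    HasDerivAt (fun τ ↦ dot2 (v τ) (w τ)) (dot2 v' (w t) + dot2 (v t) w') t := by
  have hv₁ : HasDerivAt (fun τ ↦ (v τ).1) v'.1 t := hv.fst
  have hv₂ : HasDerivAt (fun τ ↦ (v τ).2) v'.2 t := hv.snd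
  have hw₁ : HasDerivAt (fun τ ↦ (w τ).1) w'.1 t := hw.fst
  have hw₂ : HasDerivAt (fun τ ↦ (w τ).2) w'.2 t := hw.snd
  refine ((hv₁.mul hw₁).add (hv₂.mul hw₂)).congr_deriv ?_
  simp only [dot2]
  ring

theorem nrm2_eq_sqrt_dot2_self (v : ℝ × ℝ) : nrm2 v = √(dot2 v v) := by
  simp only [nrm2, dot2, sq]

theorem nrm2_nonneg (v : ℝ × ℝ) : 0 ≤ nrm2 v := sqrt_nonneg _

theorem nrm2_pos {v : ℝ × ℝ} (hv : v ≠ 0) : 0 < nrm2 v := by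
  rw [nrm2_eq_sqrt_dot2_self]
  exact sqrt_pos.2 (dot2_self_pos hv)

theorem contDiffAt_nrm2 {v : ℝ × ℝ} {n : WithTop ℕ∞} (hv : v ≠ 0) : ContDiffAt ℝ n nrm2 v := by
  rw [funext nrm2_eq_sqrt_dot2_self]
  exact ContDiffAt.sqrt (by unfold dot2; fun_prop) (dot2_self_pos hv).ne'

theorem hasDerivAt_nrm2 {v : ℝ → ℝ × ℝ} {v' : ℝ × ℝ} {t : ℝ} (hv : HasDerivAt v v' t)
    (hvt : v t ≠ 0) :
    HasDerivAt (fun τ ↦ nrm2 (v τ)) (dot2 ((nrm2 (v t))⁻¹ • v t) v') t := by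
  simp only [nrm2_eq_sqrt_dot2_self]
  refine ((hasDerivAt_dot2 hv hv).sqrt (dot2_self_pos hvt).ne').congr_deriv ?_
  rw [dot2_comm v', ← two_mul, dot2_smul_left, mul_div_mul_left _ _ two_ne_zero, div_eq_inv_mul]

end Plane

section Curve

variable {β : ℝ → ℝ × ℝ} {u : ℝ}

theorem differentiableAt_tangentC (hβ : DifferentiableAt ℝ (deriv β) u) (hreg : deriv β u ≠ 0) :
    DifferentiableAt ℝ (tangentC β) u :=
  ((hasDerivAt_nrm2 hβ.hasDerivAt hreg).differentiableAt.inv (nrm2_pos hreg).ne').smul hβ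

theorem dot2_deriv_tangentC_normalC (hreg : deriv β u ≠ 0) :
    dot2 (deriv (tangentC β) u) (normalC β u) = curvature β u * nrm2 (deriv β u) := by
  rw [curvature, arcDeriv, dot2_smul_left]
  field_simp [(nrm2_pos hreg).ne']

theorem dot2_tangentC_deriv_of_normal {f : ℝ → ℝ} {V : ℝ → ℝ × ℝ}
    (hβ : DifferentiableAt ℝ (deriv β) u) (hreg : deriv β u ≠ 0) (hV : DifferentiableAt ℝ V u)
    (hVf : ∀ᶠ v in 𝓝 u, V v = f v • normalC β v) :
    dot2 (tangentC β u) (deriv V u) = -(f u * curvature β u * nrm2 (deriv β u)) := by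
  have hortho : (fun v ↦ dot2 (tangentC β v) (V v)) =ᶠ[𝓝 u] fun _ ↦ 0 := by
    filter_upwards [hVf] with v hv
    rw [hv, dot2_smul_right, normalC, dot2_Jrot_self, mul_zero]
  have hprod : HasDerivAt (fun v ↦ dot2 (tangentC β v) (V v))
      (dot2 (deriv (tangentC β) u) (V u) + dot2 (tangentC β u) (deriv V u)) u :=
    hasDerivAt_dot2 (differentiableAt_tangentC hβ hreg).hasDerivAt hV.hasDerivAt
  have hzero : dot2 (deriv (tangentC β) u) (V u) + dot2 (tangentC β u) (deriv V u) = 0 :=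
    hprod.unique ((hasDerivAt_const u 0).congr_of_eventuallyEq hortho)
  rw [eq_neg_of_add_eq_zero_right hzero, hVf.self_of_nhds, dot2_smul_right,
    dot2_deriv_tangentC_normalC hreg, mul_assoc]

end Curve

/-- The `ψ`-length `L_ψ` of the arc of `β` over the parameter interval from `a` to `b`. -/
def psiLength (ψ : ℝ × ℝ → ℝ) (a b : ℝ) (β : ℝ → ℝ × ℝ) : ℝ :=
  ∫ u in a..b, exp (ψ (β u)) * nrm2 (deriv β u)

section NormalVariation

variable {γ : ℝ → ℝ → ℝ × ℝ} {f : ℝ → ℝ} {ψ : ℝ × ℝ → ℝ} {t u : ℝ}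

theorem contDiffAt_psiLength_integrand (hγ : ContDiffAt ℝ 2 (uncurry γ) (t, u))
    (hreg : deriv (γ t) u ≠ 0) (hψ : ContDiffAt ℝ 1 ψ (γ t u)) :
    ContDiffAt ℝ 1 (uncurry fun τ v ↦ exp (ψ (γ τ v)) * nrm2 (deriv (γ τ) v)) (t, u) := by
  have hweight : ContDiffAt ℝ 1 (fun p : ℝ × ℝ ↦ ψ (γ p.1 p.2)) (t, u) :=
    hψ.comp (t, u) (hγ.of_le one_le_two)
  have hspeed : ContDiffAt ℝ 1 (fun p : ℝ × ℝ ↦ nrm2 (deriv (γ p.1) p.2)) (t, u) :=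
    ContDiffAt.comp (g := nrm2) (t, u) (contDiffAt_nrm2 hreg)
      (contDiffAt_deriv_snd hγ one_add_one_eq_two.le)
  exact hweight.exp.mul hspeed

theorem hasDerivAt_speed_of_normal_variation (hγ : ContDiffAt ℝ 2 (uncurry γ) (t, u))
    (hreg : deriv (γ t) u ≠ 0)
    (hflow : ∀ᶠ v in 𝓝 u, deriv (fun τ ↦ γ τ v) t = f v • normalC (γ t) v) :
    HasDerivAt (fun τ ↦ nrm2 (deriv (γ τ) u))
      (-(f u * curvature (γ t) u * nrm2 (deriv (γ t) u))) t := by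
  have hsnd : DifferentiableAt ℝ (fun p : ℝ × ℝ ↦ deriv (γ p.1) p.2) (t, u) :=
    (contDiffAt_deriv_snd hγ one_add_one_eq_two.le).differentiableAt one_ne_zero
  have hfst : DifferentiableAt ℝ (fun p : ℝ × ℝ ↦ deriv (fun τ ↦ γ τ p.2) p.1) (t, u) :=
    (contDiffAt_deriv_fst hγ one_add_one_eq_two.le).differentiableAt one_ne_zero
  refine (hasDerivAt_nrm2 (hasDerivAt_comp_prodMk_left
    hsnd.hasFDerivAt).differentiableAt.hasDerivAt hreg).congr_deriv ?_
  rw [deriv_deriv_comm hγ (by simp)]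
  exact dot2_tangentC_deriv_of_normal
    (hasDerivAt_comp_prodMk_right hsnd.hasFDerivAt).differentiableAt hreg
    (hasDerivAt_comp_prodMk_right hfst.hasFDerivAt).differentiableAt hflow

theorem hasDerivAt_psiLength_integrand (hγ : ContDiffAt ℝ 2 (uncurry γ) (t, u))
    (hreg : deriv (γ t) u ≠ 0) (hψ : DifferentiableAt ℝ ψ (γ t u))
    (hflow : ∀ᶠ v in 𝓝 u, deriv (fun τ ↦ γ τ v) t = f v • normalC (γ t) v) :
    HasDerivAt (fun τ ↦ exp (ψ (γ τ u)) * nrm2 (deriv (γ τ) u))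
      (-(f u * psiCurv ψ (γ t) u * exp (ψ (γ t u)) * nrm2 (deriv (γ t) u))) t := by
  have hvel : HasDerivAt (fun τ ↦ γ τ u) (f u • normalC (γ t) u) t :=
    hflow.self_of_nhds ▸ (hasDerivAt_comp_prodMk_left
      (hγ.differentiableAt two_ne_zero).hasFDerivAt).differentiableAt.hasDerivAt
  have hweight : HasDerivAt (fun τ ↦ ψ (γ τ u)) (f u * fderiv ℝ ψ (γ t u) (normalC (γ t) u)) t :=
    (hψ.hasFDerivAt.comp_hasDerivAt t hvel).congr_deriv (map_smul _ _ _)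
  refine (hweight.exp.mul (hasDerivAt_speed_of_normal_variation hγ hreg hflow)).congr_deriv ?_
  rw [psiCurv]
  ring

variable {a b : ℝ} {I J : Set ℝ}

theorem hasDerivAt_psiLength (hI : I ∈ 𝓝 t) (hJ : IsOpen J) (hab : uIcc a b ⊆ J)
    (hγ : ∀ τ ∈ I, ∀ u ∈ J, ContDiffAt ℝ 2 (uncurry γ) (τ, u))
    (hreg : ∀ τ ∈ I, ∀ u ∈ J, deriv (γ τ) u ≠ 0)
    (hψ : ∀ τ ∈ I, ∀ u ∈ J, ContDiffAt ℝ 1 ψ (γ τ u))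
    (hflow : ∀ u ∈ J, deriv (fun τ ↦ γ τ u) t = f u • normalC (γ t) u) :
    HasDerivAt (fun τ ↦ psiLength ψ a b (γ τ))
      (-∫ u in a..b,
        f u * psiCurv ψ (γ t) u * exp (ψ (γ t u)) * nrm2 (deriv (γ t) u)) t := by
  have ht : t ∈ I := mem_of_mem_nhds hI
  refine (hasDerivAt_intervalIntegral_of_contDiffAt hI fun τ hτ u hu ↦
    contDiffAt_psiLength_integrand (hγ τ hτ u (hab hu)) (hreg τ hτ u (hab hu))
      (hψ τ hτ u (hab hu))).congr_deriv ?_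
  rw [← intervalIntegral.integral_neg]
  refine intervalIntegral.integral_congr fun u hu ↦ ?_
  exact (hasDerivAt_psiLength_integrand (hγ t ht u (hab hu)) (hreg t ht u (hab hu))
    ((hψ t ht u (hab hu)).differentiableAt one_ne_zero)
    (Filter.eventually_of_mem (hJ.mem_nhds (hab hu)) hflow)).deriv

theorem hasDerivAt_psiLength_of_psiMCF (hI : I ∈ 𝓝 t) (hJ : IsOpen J) (hab : uIcc a b ⊆ J)
    (hγ : ∀ τ ∈ I, ∀ u ∈ J, ContDiffAt ℝ 2 (uncurry γ) (τ, u))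
    (hreg : ∀ τ ∈ I, ∀ u ∈ J, deriv (γ τ) u ≠ 0)
    (hψ : ∀ τ ∈ I, ∀ u ∈ J, ContDiffAt ℝ 1 ψ (γ τ u))
    (hflow : ∀ u ∈ J, deriv (fun τ ↦ γ τ u) t = psiCurv ψ (γ t) u • normalC (γ t) u) :
    HasDerivAt (fun τ ↦ psiLength ψ a b (γ τ))
      (-∫ u in a..b, psiCurv ψ (γ t) u ^ 2 * exp (ψ (γ t u)) * nrm2 (deriv (γ t) u)) t := by
  simpa only [sq] using hasDerivAt_psiLength hI hJ hab hγ hreg hψ hflow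

theorem antitoneOn_psiLength_of_hasDerivAt (hab : a ≤ b) (hI : Convex ℝ I)
    (hderiv : ∀ t ∈ I, HasDerivAt (fun τ ↦ psiLength ψ a b (γ τ))
      (-∫ u in a..b, psiCurv ψ (γ t) u ^ 2 * exp (ψ (γ t u)) * nrm2 (deriv (γ t) u)) t) :
    AntitoneOn (fun τ ↦ psiLength ψ a b (γ τ)) I := by
  refine antitoneOn_of_deriv_nonpos hI (fun t ht ↦ (hderiv t ht).continuousAt.continuousWithinAt)
    (fun t ht ↦ (hderiv t (interior_subset ht)).differentiableAt.differentiableWithinAt)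
    fun t ht ↦ ?_
  rw [(hderiv t (interior_subset ht)).deriv, neg_nonpos]
  exact intervalIntegral.integral_nonneg hab fun u _ ↦
    mul_nonneg (by positivity) (nrm2_nonneg _)

end NormalVariation

theorem psiLength_first_variation_general {a b : ℝ} (hab : a ≤ b) {I J : Set ℝ} (hI : IsOpen I)
    (hIc : Convex ℝ I) (hJ : IsOpen J) (habJ : Icc a b ⊆ J) {γ : ℝ → ℝ → ℝ × ℝ}
    {f : ℝ → ℝ → ℝ} {ψ : ℝ × ℝ → ℝ}
    (hγ : ∀ t ∈ I, ∀ u ∈ J, ContDiffAt ℝ 2 (uncurry γ) (t, u))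
    (hreg : ∀ t ∈ I, ∀ u ∈ J, deriv (γ t) u ≠ 0)
    (hψ : ∀ t ∈ I, ∀ u ∈ J, ContDiffAt ℝ 1 ψ (γ t u))
    (hflow : ∀ t ∈ I, ∀ u ∈ J, deriv (fun τ ↦ γ τ u) t = f t u • normalC (γ t) u) :
    (∀ t ∈ I, HasDerivAt (fun τ ↦ psiLength ψ a b (γ τ))
      (-∫ u in a..b,
        f t u * psiCurv ψ (γ t) u * exp (ψ (γ t u)) * nrm2 (deriv (γ t) u)) t) ∧
    ((∀ t ∈ I, ∀ u ∈ J, f t u = psiCurv ψ (γ t) u) →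
      (∀ t ∈ I, HasDerivAt (fun τ ↦ psiLength ψ a b (γ τ))
        (-∫ u in a..b, psiCurv ψ (γ t) u ^ 2 * exp (ψ (γ t u)) * nrm2 (deriv (γ t) u)) t) ∧
      AntitoneOn (fun τ ↦ psiLength ψ a b (γ τ)) I) := by
  rw [← uIcc_of_le hab] at habJ
  refine ⟨fun t ht ↦ hasDerivAt_psiLength (hI.mem_nhds ht) hJ habJ hγ hreg hψ (hflow t ht),
    fun hf ↦ ?_⟩
  have hderiv := fun t ht ↦ hasDerivAt_psiLength_of_psiMCF (hI.mem_nhds ht) hJ habJ hγ hreg hψ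
    fun u hu ↦ hf t ht u hu ▸ hflow t ht u hu
  exact ⟨hderiv, antitoneOn_psiLength_of_hasDerivAt hab hIc hderiv⟩

/-- first variation of the ψ-length under a normal variation
∂_t γ = f N; under ψMCF the ψ-length is nonincreasing. -/
theorem psiLength_first_variation
    (ε : ℝ) (hε : 0 < ε) (γ : ℝ → ℝ → ℝ × ℝ) (f : ℝ → ℝ → ℝ)
    (hfam : SmoothFamily γ)
    (hf : ContDiff ℝ (⊤ : ℕ∞) fun p : ℝ × ℝ => f p.1 p.2)
    (hclosed : ∀ t ∈ Set.Ioo (-ε) ε, IsClosedCurve (γ t))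
    (ψ : ℝ × ℝ → ℝ) (U : Set (ℝ × ℝ)) (hU : IsOpen U)
    (hψ : ContDiffOn ℝ (⊤ : ℕ∞) ψ U)
    (him : ∀ t ∈ Set.Ioo (-ε) ε, ∀ u : ℝ, γ t u ∈ U)
    (hflow : ∀ t ∈ Set.Ioo (-ε) ε, ∀ u : ℝ,
      deriv (fun τ => γ τ u) t = f t u • normalC (γ t) u) :
    (∀ t ∈ Set.Ioo (-ε) ε,
      HasDerivAt
        (fun τ => ∫ u in (0:ℝ)..(2*π), Real.exp (ψ (γ τ u)) * nrm2 (deriv (γ τ) u))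
        (-∫ u in (0:ℝ)..(2*π),
            f t u * psiCurv ψ (γ t) u * Real.exp (ψ (γ t u)) * nrm2 (deriv (γ t) u)) t)
    ∧ ((∀ t ∈ Set.Ioo (-ε) ε, ∀ u : ℝ, f t u = psiCurv ψ (γ t) u) →
        (∀ t ∈ Set.Ioo (-ε) ε,
          HasDerivAt
            (fun τ => ∫ u in (0:ℝ)..(2*π), Real.exp (ψ (γ τ u)) * nrm2 (deriv (γ τ) u))
            (-∫ u in (0:ℝ)..(2*π),
                (psiCurv ψ (γ t) u) ^ 2 * Real.exp (ψ (γ t u)) * nrm2 (deriv (γ t) u)) t)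
        ∧ AntitoneOn
            (fun τ => ∫ u in (0:ℝ)..(2*π), Real.exp (ψ (γ τ u)) * nrm2 (deriv (γ τ) u))
            (Set.Ioo (-ε) ε)) := by
  have hgeneral := psiLength_first_variation_general two_pi_pos.le isOpen_Ioo (convex_Ioo (-ε) ε)
    isOpen_univ (subset_univ _) (f := f)
    (fun t _ u _ ↦ (contDiff_infty.1 hfam 2).contDiffAt) (fun t ht u _ ↦ (hclosed t ht).regular u)
    (fun t ht u _ ↦ (contDiffOn_infty.1 hψ 1).contDiffAt (hU.mem_nhds (him t ht u)))
    (fun t ht u _ ↦ hflow t ht u)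
  exact ⟨hgeneral.1, fun hf ↦ hgeneral.2 fun t ht u _ ↦ hf t ht u⟩
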